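/- Let k ≥ 2 be an integer and let 0 < ε' < 1. For all sufficiently large n (depending on k and ε'), if G is an n-vertex W_{2k+1}-free simple graph attaining the maximum spectral radius among all n-vertex W_{2k+1}-free graphs, and x is a nonnegative eigenvector of the adjacency matrix of G corresponding to λ₁(G), normalized so that its maximum entry equals 1, then x_u > 1 − ε' for every vertex u of G. -/

import Mathlib

/-- The wheel graph on `t` vertices: vertex `0` joined to every vertex of the
cycle `1, 2, …, t-1` (with `t-1` adjacent to `1`). -/
def wheelGraph (t : ℕ) : SimpleGraph (Fin t) where
  Adj a b := a ≠ b ∧ (a.val = 0 ∨ b.val = 0 ∨ a.val + 1 = b.val ∨ b.val + 1 = a.val ∨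
      (a.val = 1 ∧ b.val = t - 1) ∨ (b.val = 1 ∧ a.val = t - 1))
  symm := by
    refine ⟨?_⟩
    intro a b h
    exact ⟨h.1.symm, by tauto⟩
  loopless := by
    refine ⟨?_⟩
    intro a h
    exact h.1 rfl

/-- `G` contains a copy of `F`, i.e. a subgraph isomorphic to `F`. -/
def ContainsCopy {α β : Type*} (F : SimpleGraph α) (G : SimpleGraph β) : Prop :=
  ∃ f : α ↪ β, ∀ a b, F.Adj a b → G.Adj (f a) (f b)

/-- `G` is `W_t`-free: it contains no subgraph isomorphic to the wheel on `t` vertices. -/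
def WheelFree (t : ℕ) {n : ℕ} (G : SimpleGraph (Fin n)) : Prop :=
  ¬ ContainsCopy (wheelGraph t) G

/-- The spectral radius of `G`: the largest eigenvalue of its adjacency matrix. -/
noncomputable def lam1 {n : ℕ} (G : SimpleGraph (Fin n)) : ℝ := by
  classical
  exact sSup {μ : ℝ | Module.End.HasEigenvalue (Matrix.toLin' (G.adjMatrix ℝ)) μ}

/-- The number of edges of a graph on a finite vertex type. -/
noncomputable def edgeCount {V : Type*} [Fintype V] (G : SimpleGraph V) : ℕ := by
  classical
  exact G.edgeFinset.card

/-- The degree of a vertex. -/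
noncomputable def deg {n : ℕ} (G : SimpleGraph (Fin n)) (v : Fin n) : ℕ := by
  classical
  exact G.degree v

/-- The number of neighbours of `v` inside the set `A`. -/
noncomputable def degIn {n : ℕ} (G : SimpleGraph (Fin n)) (A : Finset (Fin n)) (v : Fin n) : ℕ := by
  classical
  exact (A.filter fun u => G.Adj v u).card

/-- The number of edges of `G` with one endpoint in `S` and the other outside `S`. -/
noncomputable def cutCount {n : ℕ} (G : SimpleGraph (Fin n)) (S : Finset (Fin n)) : ℕ := by
  classical
  exact ((Finset.univ : Finset (Fin n × Fin n)).filter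
    fun p => G.Adj p.1 p.2 ∧ p.1 ∈ S ∧ p.2 ∉ S).card

/-- `(S, T)` is a maximum cut of `G`. -/
def IsMaxCut {n : ℕ} (G : SimpleGraph (Fin n)) (S T : Finset (Fin n)) : Prop :=
  T = Sᶜ ∧ ∀ S' : Finset (Fin n), cutCount G S' ≤ cutCount G S

/-- `G` attains the maximum spectral radius among all `n`-vertex `W_t`-free graphs. -/
def IsSpexWheel (t : ℕ) {n : ℕ} (G : SimpleGraph (Fin n)) : Prop :=
  WheelFree t G ∧ ∀ H : SimpleGraph (Fin n), WheelFree t H → lam1 H ≤ lam1 G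

/-- `G` attains the maximum number of edges among all `n`-vertex `W_t`-free graphs. -/
def IsExWheel (t : ℕ) {n : ℕ} (G : SimpleGraph (Fin n)) : Prop :=
  WheelFree t G ∧ ∀ H : SimpleGraph (Fin n), WheelFree t H → edgeCount H ≤ edgeCount G

/-- Multiplication of a vector by the adjacency matrix of `G`. -/
noncomputable def adjMulVec {n : ℕ} (G : SimpleGraph (Fin n)) (x : Fin n → ℝ) :
    Fin n → ℝ := by
  classical
  exact (G.adjMatrix ℝ).mulVec x

/-!
The argument works for every `F` that is not bipartite but becomes so on deleting some vertex `c`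
(for an odd wheel, the hub). A neighbourhood `N(z)` in an `F`-free graph contains no copy of
`F - c`, so it spans only `o(n²)` edges by the Erdős–Stone theorem. Let `x` be the eigenvector,
`x_z = 1` and `L = λ₁(G)`. The Turán graph `T(n, 2)` is `F`-free, whence `L ≥ (n - 1) / 2`.
Counting walks of length two from `z` gives

  `L² = ∑_{w ∈ N(z)} codeg(z, w) x_w + ∑_{w ∉ N(z)} codeg(z, w) x_w ≤ o(n²) + d(z) (n - d(z))`,

and this leaves almost no slack: `d(z) ≈ n / 2`, and all but `o(n)` of the non-neighbours `w` of
`z` see almost all of `N(z)` and have `x_w ≈ 1`. Deleting the edges at an arbitrary vertex `v` and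
joining `v` to these `w` instead keeps the graph `F`-free, since in any copy of `F` a common
neighbour of the other vertices can take the place of `v`. Extremality of `G`, tested on the vector
`x` with `x_v` replaced by `1`, then yields `n ≲ 2 ∑ x_w ≤ L (1 + x_v²) ≈ (n / 2) (1 + x_v²)`.
-/

open Filter Finset Matrix SimpleGraph

variable {α β : Type*}

theorem containsCopy_iff_isContained {F : SimpleGraph α} {G : SimpleGraph β} :
    ContainsCopy F G ↔ F ⊑ G :=
  ⟨fun ⟨f, hf⟩ ↦ ⟨⟨⟨f, hf _ _⟩, f.injective⟩⟩,
    fun ⟨f⟩ ↦ ⟨f.toEmbedding, fun _ _ h ↦ f.toHom.map_adj h⟩⟩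

/-- `G` attains the maximum spectral radius among all `F`-free graphs on `n` labelled vertices,
the relation written `G ∈ SPEX(n, F)` in the literature. -/
def IsSpex (F : SimpleGraph α) {n : ℕ} (G : SimpleGraph (Fin n)) : Prop :=
  F.Free G ∧ ∀ H : SimpleGraph (Fin n), F.Free H → lam1 H ≤ lam1 G

theorem isSpexWheel_iff_isSpex {t n : ℕ} {G : SimpleGraph (Fin n)} :
    IsSpexWheel t G ↔ IsSpex (wheelGraph t) G := by
  simp only [IsSpexWheel, IsSpex, WheelFree, containsCopy_iff_isContained]

theorem not_colorable_two_wheelGraph {t : ℕ} (ht : 3 ≤ t) : ¬ (wheelGraph t).Colorable 2 := by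
  rintro ⟨C⟩
  have h01 : C ⟨0, by lia⟩ ≠ C ⟨1, by lia⟩ := C.valid (by simp [wheelGraph])
  have h02 : C ⟨0, by lia⟩ ≠ C ⟨2, by lia⟩ := C.valid (by simp [wheelGraph])
  have h12 : C ⟨1, by lia⟩ ≠ C ⟨2, by lia⟩ := C.valid (by simp [wheelGraph])
  lia

theorem colorable_two_induce_compl_wheelGraph (k : ℕ) :
    ((wheelGraph (2 * k + 1)).induce {0}ᶜ).Colorable 2 := by
  refine (Coloring.mk (fun u ↦ decide (Even u.1.val)) ?_ : Coloring _ Bool).colorable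
  rintro ⟨a, ha⟩ ⟨b, hb⟩ ⟨-, hab⟩
  simp only [Set.mem_compl_iff, Set.mem_singleton_iff, Fin.ext_iff, Fin.val_zero] at ha hb
  simp only [Function.Embedding.subtype_apply] at hab
  simp only [ne_eq, decide_eq_decide, Nat.even_iff]
  lia

theorem isContained_of_induce_compl_isContained_neighborSet {F : SimpleGraph α}
    {G : SimpleGraph β} {z : α} {v : β} (h : F.induce {z}ᶜ ⊑ G.induce (G.neighborSet v)) :
    F ⊑ G := by
  classical
  obtain ⟨f⟩ := h
  have hv (a : α) (ha : a ≠ z) : G.Adj v (f ⟨a, ha⟩) := (f ⟨a, ha⟩).2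
  refine ⟨⟨⟨fun a ↦ if ha : a = z then v else f ⟨a, ha⟩, ?_⟩, ?_⟩⟩
  · intro a b hab
    split_ifs with ha hb hb
    · exact absurd (ha.trans hb.symm) hab.ne
    · exact hv b hb
    · exact (hv a ha).symm
    · exact f.toHom.map_adj (show (F.induce {z}ᶜ).Adj ⟨a, ha⟩ ⟨b, hb⟩ from hab)
  · intro a b hab
    simp only [RelHom.coeFn_mk] at hab
    split_ifs at hab with ha hb hb
    · exact ha.trans hb.symm
    · exact absurd hab (hv b hb).ne
    · exact absurd hab.symm (hv a ha).ne
    · exact congrArg Subtype.val (f.injective (Subtype.val_injective hab))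

theorem free_completeEquipartiteGraph_neighborSet [Fintype α] {F : SimpleGraph α}
    {G : SimpleGraph β} {z : α} {r : ℕ} (hz : (F.induce {z}ᶜ).Colorable r) (hG : F.Free G)
    (v : β) :
    (completeEquipartiteGraph r (Fintype.card α)).Free (G.induce (G.neighborSet v)) := by
  classical
  obtain ⟨C⟩ := hz
  refine fun h ↦ hG (isContained_of_induce_compl_isContained_neighborSet
    ((isContained_completeEquipartiteGraph_of_colorable C _ fun c ↦ ?_).trans h))
  exact (set_fintype_card_le_univ _).trans (Fintype.card_subtype_le _)

theorem extremalNumber_succ_le_of_minDegree_le {H : SimpleGraph α} {n : ℕ} {d : ℝ} (hd : 0 ≤ d)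
    (h : ∀ (G : SimpleGraph (Fin (n + 1))) [DecidableRel G.Adj], H.Free G → G.minDegree ≤ d) :
    (extremalNumber (n + 1) H : ℝ) ≤ extremalNumber n H + d := by
  have := extremalNumber_le_iff_of_nonneg (V := Fin (n + 1)) H
    (show (0 : ℝ) ≤ extremalNumber n H + d by positivity)
  rw [Fintype.card_fin] at this
  rw [this]
  intro G _ hG
  obtain ⟨v, hv⟩ := G.exists_minimal_degree_vertex
  have hdel := card_edgeFinset_deleteIncidenceSet_le_extremalNumber hG v
  rw [card_edgeFinset_deleteIncidenceSet, Fintype.card_fin, add_tsub_cancel_right,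
    tsub_le_iff_right] at hdel
  calc (#G.edgeFinset : ℝ) ≤ extremalNumber n H + G.degree v := mod_cast hdel
    _ ≤ extremalNumber n H + d := by gcongr; exact hv ▸ h G hG

theorem exists_le_quadratic_of_eventually_succ_le {u : ℕ → ℝ} {c ε : ℝ} (hε : 0 < ε)
    (hu : ∀ᶠ n : ℕ in atTop, u (n + 1) ≤ u n + c * (n + 1)) :
    ∃ C, ∀ n : ℕ, u n ≤ (c + ε) * n ^ 2 / 2 + C := by
  obtain ⟨N, hN⟩ := eventually_atTop.mp hu
  obtain ⟨M, hM⟩ := ((Set.finite_Iic N).image fun n : ℕ ↦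
    u n - c * (n * (n + 1)) / 2).bddAbove
  have hle (n : ℕ) : u n ≤ c * (n * (n + 1)) / 2 + M := by
    rcases le_total n N with hn | hn
    · linarith [hM (Set.mem_image_of_mem _ hn)]
    · induction n, hn using Nat.le_induction with
      | base => linarith [hM (Set.mem_image_of_mem _ (Set.self_mem_Iic (a := N)))]
      | succ n hn ih => push_cast; linarith [hN n hn]
  refine ⟨M + c ^ 2 / (8 * ε), fun n ↦ (hle n).trans ?_⟩
  have hsq : c * n / 2 ≤ ε * n ^ 2 / 2 + c ^ 2 / (8 * ε) := by
    have : ε * n ^ 2 / 2 + c ^ 2 / (8 * ε) - c * n / 2 = (2 * ε * n - c) ^ 2 / (8 * ε) := by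
      field_simp; ring
    linarith [show 0 ≤ (2 * ε * n - c) ^ 2 / (8 * ε) by positivity]
  linarith

theorem exists_extremalNumber_completeEquipartiteGraph_le {ε : ℝ} (hε : 0 < ε) {r : ℕ}
    (hr : 0 < r) (t : ℕ) :
    ∃ C, ∀ n : ℕ, (extremalNumber n (completeEquipartiteGraph (r + 1) t) : ℝ) ≤
      (1 - 1 / r + ε) * n ^ 2 / 2 + C := by
  have hr' : 0 ≤ 1 - 1 / (r : ℝ) :=
    sub_nonneg.mpr ((div_le_one (by positivity)).mpr (mod_cast hr))
  have hES := eventually_completeEquipartiteGraph_isContained_of_minDegree (half_pos hε) r t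
  have hrec : ∀ᶠ n : ℕ in atTop,
      (extremalNumber (n + 1) (completeEquipartiteGraph (r + 1) t) : ℝ) ≤
        extremalNumber n (completeEquipartiteGraph (r + 1) t) + (1 - 1 / r + ε / 2) * (n + 1) := by
    filter_upwards [(tendsto_add_atTop_nat 1).eventually hES] with n hn
    refine extremalNumber_succ_le_of_minDegree_le (by positivity) fun G _ hG ↦ ?_
    by_contra! hdeg
    exact hG (hn (by push_cast; exact hdeg.le))
  obtain ⟨C, hC⟩ := exists_le_quadratic_of_eventually_succ_le
    (u := fun n ↦ extremalNumber n (completeEquipartiteGraph (r + 1) t)) (half_pos hε) hrec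
  exact ⟨C, fun n ↦ by convert hC n using 4; ring⟩

section Codegree

variable {V : Type*} [Fintype V] [DecidableEq V] (G : SimpleGraph V) [DecidableRel G.Adj]

/-- The codegree of `z` and `w`: the number of their common neighbours, equivalently of walks of
length two between them. In particular `codegree G z z` is the degree of `z`. -/
def codegree (z w : V) : ℕ := #(G.neighborFinset z ∩ G.neighborFinset w)

theorem codegree_le_degree (z w : V) : codegree G z w ≤ G.degree z :=
  card_le_card inter_subset_left

theorem cast_card_compl_neighborFinset (z : V) :
    (#(G.neighborFinset z)ᶜ : ℝ) = Fintype.card V - G.degree z := by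
  rw [card_compl, Nat.cast_sub (card_le_univ _), card_neighborFinset_eq_degree]

theorem adjMatrix_mul_self_apply (z w : V) :
    (G.adjMatrix ℝ * G.adjMatrix ℝ) z w = codegree G z w := by
  simp only [adjMatrix_mul_apply, adjMatrix_apply, sum_boole, codegree, ← filter_mem_eq_inter,
    mem_neighborFinset, G.adj_comm w]

theorem sum_codegree_neighborFinset (z : V) :
    ∑ w ∈ G.neighborFinset z, codegree G z w =
      2 * #(G.induce (G.neighborSet z)).edgeFinset := by
  rw [← sum_degrees_eq_twice_card_edges,
    sum_subtype _ (fun w ↦ (G.mem_neighborFinset z w).trans (G.mem_neighborSet z w).symm)]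
  refine sum_congr rfl fun w _ ↦ ?_
  rw [codegree, inter_comm, ← card_neighborFinset_eq_degree,
    ← card_map (.subtype (· ∈ G.neighborSet z)), map_neighborFinset_induce]
  rfl

end Codegree

theorem eventually_sum_codegree_neighborFinset_le [Finite α] {F : SimpleGraph α} {z : α}
    (hz : (F.induce {z}ᶜ).Colorable 2) {δ : ℝ} (hδ : 0 < δ) :
    ∀ᶠ n : ℕ in atTop, ∀ (G : SimpleGraph (Fin n)) [DecidableRel G.Adj], F.Free G →
      ∀ v, (n : ℝ) / 2 + ∑ w ∈ G.neighborFinset v, (codegree G v w : ℝ) ≤ δ * n ^ 2 := by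
  have := Fintype.ofFinite α
  obtain ⟨C, hC⟩ := exists_extremalNumber_completeEquipartiteGraph_le (half_pos hδ) one_pos
    (Fintype.card α)
  filter_upwards [eventually_ge_atTop 1,
    eventually_ge_atTop ⌈(1 + 4 * |C|) / δ⌉₊] with n hn1 hn G _ hG v
  have hedges : (#(G.induce (G.neighborSet v)).edgeFinset : ℝ) ≤ δ / 2 * n ^ 2 / 2 + C :=
    calc (#(G.induce (G.neighborSet v)).edgeFinset : ℝ)
      _ ≤ extremalNumber (G.degree v) (completeEquipartiteGraph 2 (Fintype.card α)) := by
        rw [← G.card_neighborSet_eq_degree]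
        exact mod_cast card_edgeFinset_le_extremalNumber
          (free_completeEquipartiteGraph_neighborSet hz hG v)
      _ ≤ δ / 2 * (G.degree v : ℝ) ^ 2 / 2 + C := by simpa using hC (G.degree v)
      _ ≤ δ / 2 * n ^ 2 / 2 + C := by
        gcongr
        simpa using (G.degree_lt_card_verts v).le
  have hlin : (1 + 4 * |C|) * n ≤ δ * n ^ 2 := by
    have := (div_le_iff₀' hδ).mp (Nat.ceil_le.mp hn)
    nlinarith
  have hC' : C ≤ |C| * n := (le_abs_self C).trans <|
    le_mul_of_one_le_right (abs_nonneg C) (mod_cast hn1)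
  rw [← Nat.cast_sum, sum_codegree_neighborFinset]
  push_cast
  linarith

theorem adjMulVec_eq {n : ℕ} (G : SimpleGraph (Fin n)) [DecidableRel G.Adj] (x : Fin n → ℝ) :
    adjMulVec G x = G.adjMatrix ℝ *ᵥ x := by
  simp only [adjMulVec]
  congr!

theorem lam1_eq_sSup {n : ℕ} (G : SimpleGraph (Fin n)) [DecidableRel G.Adj] :
    lam1 G = sSup {μ : ℝ | Module.End.HasEigenvalue (toLin' (G.adjMatrix ℝ)) μ} := by
  unfold lam1
  congr!

theorem le_lam1_of_hasEigenvalue {n : ℕ} {G : SimpleGraph (Fin n)} [DecidableRel G.Adj] {μ : ℝ}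
    (hμ : Module.End.HasEigenvalue (toLin' (G.adjMatrix ℝ)) μ) : μ ≤ lam1 G :=
  lam1_eq_sSup G ▸ le_csSup (Module.End.finite_hasEigenvalue _).bddAbove hμ

open scoped MatrixOrder in
theorem dotProduct_adjMatrix_mulVec_le {n : ℕ} (G : SimpleGraph (Fin n)) [DecidableRel G.Adj]
    (x : Fin n → ℝ) : x ⬝ᵥ G.adjMatrix ℝ *ᵥ x ≤ lam1 G * (x ⬝ᵥ x) := by
  have hle : G.adjMatrix ℝ ≤ algebraMap ℝ _ (lam1 G) := by
    refine le_algebraMap_of_spectrum_le (fun μ hμ ↦ le_lam1_of_hasEigenvalue ?_)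
      (G.isHermitian_adjMatrix ℝ).isSelfAdjoint
    rwa [Module.End.hasEigenvalue_iff_mem_spectrum, spectrum_toLin']
  have := (Matrix.le_iff.mp hle).dotProduct_mulVec_nonneg x
  simpa [sub_mulVec, Algebra.algebraMap_eq_smul_one, smul_mulVec, dotProduct_sub] using this

theorem two_mul_card_edgeFinset_le_lam1_mul {n : ℕ} (G : SimpleGraph (Fin n))
    [DecidableRel G.Adj] : 2 * (#G.edgeFinset : ℝ) ≤ lam1 G * n := by
  have := dotProduct_adjMatrix_mulVec_le G fun _ ↦ 1
  rw [← Nat.cast_ofNat, ← Nat.cast_mul, ← sum_degrees_eq_twice_card_edges]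
  simpa [dotProduct, adjMatrix_mulVec_apply] using this

theorem colorable_turanGraph (n : ℕ) {r : ℕ} (hr : 0 < r) : (turanGraph n r).Colorable r :=
  ⟨Coloring.mk (fun v ↦ ⟨v % r, Nat.mod_lt _ hr⟩) fun h ↦ by
    simpa [Fin.ext_iff] using turanGraph_adj.mp h⟩

theorem sq_le_four_mul_card_edgeFinset_turanGraph_two_add_one (n : ℕ) :
    n ^ 2 ≤ 4 * #(turanGraph n 2).edgeFinset + 1 := by
  rw [card_edgeFinset_turanGraph]
  obtain ⟨m, rfl | rfl⟩ := n.even_or_odd'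
  · simp only [Nat.mul_mod_right]
    ring_nf
    lia
  · have : (2 * m + 1) ^ 2 - 1 ^ 2 = 4 * (m ^ 2 + m) := by lia
    rw [show (2 * m + 1) % 2 = 1 by lia, this]
    lia

theorem half_sub_one_le_lam1_turanGraph_two {n : ℕ} (hn : 0 < n) :
    ((n : ℝ) - 1) / 2 ≤ lam1 (turanGraph n 2) := by
  have hn' : (1 : ℝ) ≤ n := mod_cast hn
  have hedges : (n : ℝ) ^ 2 ≤ 4 * #(turanGraph n 2).edgeFinset + 1 :=
    mod_cast sq_le_four_mul_card_edgeFinset_turanGraph_two_add_one n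
  refine le_of_mul_le_mul_right ?_ (zero_lt_one.trans_le hn')
  linarith [two_mul_card_edgeFinset_le_lam1_mul (turanGraph n 2)]

theorem IsSpex.half_sub_one_le_lam1 {F : SimpleGraph α} (hF : ¬ F.Colorable 2) {n : ℕ}
    (hn : 0 < n) {G : SimpleGraph (Fin n)} (hG : IsSpex F G) : ((n : ℝ) - 1) / 2 ≤ lam1 G :=
  (half_sub_one_le_lam1_turanGraph_two hn).trans
    (hG.2 _ (free_of_colorable hF (colorable_turanGraph n two_pos)))

/-- The graph obtained from `G` by deleting all edges at `v` and joining `v` to every vertex of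
`S` other than `v` itself. -/
def rewire {V : Type*} (G : SimpleGraph V) (v : V) (S : Set V) : SimpleGraph V :=
  G.deleteIncidenceSet v ⊔ fromRel fun a b ↦ a = v ∧ b ∈ S

section Rewire

variable {V : Type*} {G : SimpleGraph V} {v : V} {S : Set V}

theorem rewire_adj_of_ne {a b : V} (ha : a ≠ v) (hb : b ≠ v) :
    (rewire G v S).Adj a b ↔ G.Adj a b := by
  simp [rewire, deleteIncidenceSet_adj, ha, hb]

theorem rewire_adj_left {b : V} : (rewire G v S).Adj v b ↔ b ≠ v ∧ b ∈ S := by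
  simp only [rewire, sup_adj, deleteIncidenceSet_adj, fromRel_adj]
  grind

theorem rewire_free [Fintype α] {F : SimpleGraph α} (hG : F.Free G)
    (hS : ∀ T : Finset V, #T ≤ Fintype.card α → ∃ w ∉ T, ∀ u ∈ T, u ∈ S → G.Adj w u) :
    F.Free (rewire G v S) := by
  classical
  rintro ⟨f⟩
  obtain ⟨w, hw, hadj⟩ := hS (univ.image f) card_image_le
  have hne (a : α) : f a ≠ w := fun h ↦ hw (h ▸ mem_image_of_mem f (mem_univ a))
  have hwS (a : α) : f a ∈ S → G.Adj w (f a) := hadj _ (mem_image_of_mem f (mem_univ a))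
  refine hG ⟨⟨⟨fun a ↦ if f a = v then w else f a, ?_⟩, ?_⟩⟩
  · intro a b hab
    have hf : (rewire G v S).Adj (f a) (f b) := f.toHom.map_adj hab
    split_ifs with ha hb hb
    · exact absurd (ha.trans hb.symm) hf.ne
    · exact hwS b (rewire_adj_left.mp (ha ▸ hf)).2
    · exact (hwS a (rewire_adj_left.mp (hb ▸ hf.symm)).2).symm
    · exact (rewire_adj_of_ne ha hb).mp hf
  · intro a b hab
    simp only [RelHom.coeFn_mk] at hab
    split_ifs at hab with ha hb hb
    · exact f.injective (ha.trans hb.symm)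
    · exact absurd hab.symm (hne b)
    · exact absurd hab (hne a)
    · exact f.injective hab

end Rewire

section Update

variable {V : Type*} [DecidableEq V] (x : V → ℝ) (v : V) (c : ℝ)

theorem update_eq_update_zero_add_single :
    Function.update x v c = Function.update x v 0 + Pi.single v c := by
  ext u
  by_cases hu : u = v <;> simp [hu]

variable [Fintype V]

theorem dotProduct_update_self : Function.update x v c ⬝ᵥ Function.update x v c =
    Function.update x v 0 ⬝ᵥ Function.update x v 0 + c ^ 2 := by
  rw [update_eq_update_zero_add_single x v c]
  simp only [add_dotProduct, dotProduct_add, single_dotProduct, dotProduct_single,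
    Pi.add_apply, Function.update_self, Pi.single_eq_same]
  ring

variable (G : SimpleGraph V) [DecidableRel G.Adj]

theorem adjMatrix_mulVec_update_apply_self :
    (G.adjMatrix ℝ *ᵥ Function.update x v c) v = (G.adjMatrix ℝ *ᵥ x) v := by
  simp only [adjMatrix_mulVec_apply]
  exact sum_congr rfl fun u hu ↦
    Function.update_of_ne ((G.mem_neighborFinset v u).mp hu).ne' _ _

theorem dotProduct_adjMatrix_mulVec_update :
    Function.update x v c ⬝ᵥ G.adjMatrix ℝ *ᵥ Function.update x v c =
      Function.update x v 0 ⬝ᵥ G.adjMatrix ℝ *ᵥ Function.update x v 0 +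
        2 * c * (G.adjMatrix ℝ *ᵥ x) v := by
  have hcross : Function.update x v 0 ⬝ᵥ G.adjMatrix ℝ *ᵥ Pi.single v c =
      c * (G.adjMatrix ℝ *ᵥ x) v := by
    rw [dotProduct_mulVec, ← mulVec_transpose, transpose_adjMatrix, dotProduct_single,
      adjMatrix_mulVec_update_apply_self, mul_comm]
  have hdiag : (G.adjMatrix ℝ *ᵥ Pi.single v c) v = 0 := by simp
  rw [update_eq_update_zero_add_single x v c, mulVec_add, add_dotProduct, dotProduct_add,
    dotProduct_add, single_dotProduct, single_dotProduct, hcross, hdiag,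
    adjMatrix_mulVec_update_apply_self]
  ring

end Update

theorem two_mul_sum_le_of_lam1_rewire_le {n : ℕ} {G : SimpleGraph (Fin n)} [DecidableRel G.Adj]
    {v : Fin n} {S : Finset (Fin n)} (hv : v ∉ S) {x : Fin n → ℝ}
    (hx : G.adjMatrix ℝ *ᵥ x = lam1 G • x)
    (hle : lam1 (rewire G v S) ≤ lam1 G) :
    2 * ∑ u ∈ S, x u ≤ lam1 G * (1 + x v ^ 2) := by
  classical
  have hoff : Function.update x v 0 ⬝ᵥ (rewire G v S).adjMatrix ℝ *ᵥ Function.update x v 0 =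
      Function.update x v 0 ⬝ᵥ G.adjMatrix ℝ *ᵥ Function.update x v 0 := by
    simp only [dotProduct, mulVec, mul_sum, adjMatrix_apply]
    refine sum_congr rfl fun a _ ↦ sum_congr rfl fun b _ ↦ ?_
    by_cases ha : a = v
    · simp [ha]
    by_cases hb : b = v
    · simp [hb]
    simp only [rewire_adj_of_ne ha hb]
  have hS : ((rewire G v S).adjMatrix ℝ *ᵥ x) v = ∑ u ∈ S, x u := by
    rw [adjMatrix_mulVec_apply]
    congr 1
    ext u
    simp only [mem_neighborFinset, rewire_adj_left, mem_coe]
    grind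
  have hG := dotProduct_adjMatrix_mulVec_update x v (x v) G
  have hx2 := dotProduct_update_self x v (x v)
  rw [Function.update_eq_self, hx] at hG
  rw [Function.update_eq_self] at hx2
  have hquad := (dotProduct_adjMatrix_mulVec_le (rewire G v S) (Function.update x v 1)).trans
    (mul_le_mul_of_nonneg_right hle (dotProduct_star_self_nonneg _))
  rw [dotProduct_adjMatrix_mulVec_update, hS, hoff, dotProduct_update_self] at hquad
  simp only [dotProduct_smul, Pi.smul_apply, smul_eq_mul, hx2] at hG
  linarith

section NearTwins

variable {V : Type*} [Fintype V] [DecidableEq V] (G : SimpleGraph V) [DecidableRel G.Adj]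

/-- The amount by which the contribution `codegree G z w * x w` of `w` to the number of walks of
length two from `z`, weighted by `x` at their endpoints, falls short of the degree of `z`. -/
def defect (x : V → ℝ) (z w : V) : ℝ := G.degree z - codegree G z w * x w

/-- The non-neighbours of `z` of defect at most `δ`: if `δ` is small they have weight near `1` and
almost the same neighbourhood as `z`. -/
noncomputable def nearTwins (x : V → ℝ) (z : V) (δ : ℝ) : Finset V :=
  {w ∈ (G.neighborFinset z)ᶜ | defect G x z w ≤ δ}

/-- `x` is an eigenvector of the adjacency matrix of `G` with eigenvalue `L`, nonnegative and
scaled so that its maximum entry is `x z = 1`. -/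
structure IsNormalizedEigenvector (L : ℝ) (x : V → ℝ) (z : V) : Prop where
  mulVec_eq : G.adjMatrix ℝ *ᵥ x = L • x
  nonneg : ∀ v, 0 ≤ x v
  le_one : ∀ v, x v ≤ 1
  apply_eq_one : x z = 1

variable {G} {L η : ℝ} {x : V → ℝ} {z w : V}

theorem degree_sub_codegree_le_defect (hx1 : x w ≤ 1) :
    (G.degree z : ℝ) - codegree G z w ≤ defect G x z w :=
  sub_le_sub_left (mul_le_of_le_one_right (Nat.cast_nonneg _) hx1) _

theorem degree_mul_one_sub_le_defect (hx0 : 0 ≤ x w) :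
    G.degree z * (1 - x w) ≤ defect G x z w := by
  have : codegree G z w * x w ≤ G.degree z * x w :=
    mul_le_mul_of_nonneg_right (mod_cast codegree_le_degree G z w) hx0
  rw [defect]
  linarith

theorem defect_nonneg (hx0 : 0 ≤ x w) (hx1 : x w ≤ 1) : 0 ≤ defect G x z w :=
  (mul_nonneg (Nat.cast_nonneg _) (sub_nonneg.mpr hx1)).trans (degree_mul_one_sub_le_defect hx0)

theorem sum_codegree_mul (hx : G.adjMatrix ℝ *ᵥ x = L • x) (z : V) :
    ∑ w, codegree G z w * x w = L ^ 2 * x z := by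
  have hsq : (G.adjMatrix ℝ * G.adjMatrix ℝ) *ᵥ x = L ^ 2 • x := by
    rw [← mulVec_mulVec, hx, mulVec_smul, hx, smul_smul, sq]
  simpa only [mulVec, dotProduct, adjMatrix_mul_self_apply, Pi.smul_apply, smul_eq_mul] using
    congrFun hsq z

namespace IsNormalizedEigenvector

theorem sq_add_sum_defect_le (h : IsNormalizedEigenvector G L x z) :
    L ^ 2 + ∑ w ∈ (G.neighborFinset z)ᶜ, defect G x z w ≤
      ∑ w ∈ G.neighborFinset z, (codegree G z w : ℝ) +
        G.degree z * (Fintype.card V - G.degree z) := by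
  have hwalks := sum_codegree_mul h.mulVec_eq z
  rw [h.apply_eq_one, mul_one, ← sum_add_sum_compl (G.neighborFinset z)] at hwalks
  have hnbr : ∑ w ∈ G.neighborFinset z, codegree G z w * x w ≤
      ∑ w ∈ G.neighborFinset z, (codegree G z w : ℝ) :=
    sum_le_sum fun w _ ↦ mul_le_of_le_one_right (Nat.cast_nonneg _) (h.le_one w)
  simp only [defect, sum_sub_distrib, sum_const, nsmul_eq_mul, cast_card_compl_neighborFinset]
  linarith

theorem sum_defect_add_sq_le (h : IsNormalizedEigenvector G L x z)
    (hL : ((Fintype.card V : ℝ) - 1) / 2 ≤ L)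
    (hη : (Fintype.card V : ℝ) / 2 + ∑ w ∈ G.neighborFinset z, (codegree G z w : ℝ) ≤
      (η * Fintype.card V) ^ 2) :
    ∑ w ∈ (G.neighborFinset z)ᶜ, defect G x z w + (G.degree z - Fintype.card V / 2 : ℝ) ^ 2 ≤
      (η * Fintype.card V) ^ 2 := by
  have hcard : (1 : ℝ) ≤ Fintype.card V := mod_cast Fintype.card_pos_iff.mpr ⟨z⟩
  have hsq : (((Fintype.card V : ℝ) - 1) / 2) ^ 2 ≤ L ^ 2 := by gcongr
  linarith [h.sq_add_sum_defect_le]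

theorem sum_defect_nonneg (h : IsNormalizedEigenvector G L x z) (A : Finset V) :
    0 ≤ ∑ w ∈ A, defect G x z w :=
  sum_nonneg fun w _ ↦ defect_nonneg (h.nonneg w) (h.le_one w)

theorem eigenvalue_le (h : IsNormalizedEigenvector G L x z) (hη0 : 0 ≤ η)
    (hη : ∑ w ∈ G.neighborFinset z, (codegree G z w : ℝ) ≤ (η * Fintype.card V) ^ 2) :
    L ≤ (1 / 2 + η) * Fintype.card V := by
  refine (abs_le_of_sq_le_sq' ?_ (by positivity)).2
  have hdeg : (G.degree z : ℝ) * (Fintype.card V - G.degree z) ≤ (Fintype.card V : ℝ) ^ 2 / 4 := by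
    linarith [sq_nonneg ((G.degree z : ℝ) - Fintype.card V / 2)]
  have hcross : 0 ≤ η * (Fintype.card V : ℝ) ^ 2 := by positivity
  linarith [h.sq_add_sum_defect_le, h.sum_defect_nonneg (G.neighborFinset z)ᶜ]

theorem abs_degree_sub_half_le (h : IsNormalizedEigenvector G L x z) (hη0 : 0 ≤ η)
    (hdef : ∑ w ∈ (G.neighborFinset z)ᶜ, defect G x z w +
      (G.degree z - Fintype.card V / 2 : ℝ) ^ 2 ≤ (η * Fintype.card V) ^ 2) :
    |(G.degree z : ℝ) - Fintype.card V / 2| ≤ η * Fintype.card V :=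
  abs_le_of_sq_le_sq (by linarith [h.sum_defect_nonneg (G.neighborFinset z)ᶜ]) (by positivity)

theorem card_div_three_le_degree (h : IsNormalizedEigenvector G L x z) (hη0 : 0 ≤ η)
    (hη6 : 6 * η ≤ 1)
    (hdef : ∑ w ∈ (G.neighborFinset z)ᶜ, defect G x z w +
      (G.degree z - Fintype.card V / 2 : ℝ) ^ 2 ≤ (η * Fintype.card V) ^ 2) :
    (Fintype.card V : ℝ) / 3 ≤ G.degree z := by
  have : 6 * η * Fintype.card V ≤ Fintype.card V :=
    mul_le_of_le_one_left (Nat.cast_nonneg _) hη6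
  linarith [(abs_le.mp (h.abs_degree_sub_half_le hη0 hdef)).1]

theorem le_card_nearTwins (h : IsNormalizedEigenvector G L x z) (hη0 : 0 < η)
    (hdef : ∑ w ∈ (G.neighborFinset z)ᶜ, defect G x z w +
      (G.degree z - Fintype.card V / 2 : ℝ) ^ 2 ≤ (η * Fintype.card V) ^ 2) :
    (1 / 2 - 2 * η) * Fintype.card V ≤ #(nearTwins G x z (η * Fintype.card V)) := by
  have hcard : (0 : ℝ) < Fintype.card V := mod_cast Fintype.card_pos_iff.mpr ⟨z⟩
  set N := (G.neighborFinset z)ᶜ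
  set δ := η * Fintype.card V
  have hδ : 0 < δ := by positivity
  have hmarkov : (#{w ∈ N | ¬ defect G x z w ≤ δ} : ℝ) ≤ δ := by
    refine le_of_mul_le_mul_right ?_ hδ
    calc (#{w ∈ N | ¬ defect G x z w ≤ δ} : ℝ) * δ
      _ ≤ ∑ w ∈ N with ¬ defect G x z w ≤ δ, defect G x z w := by
        rw [← nsmul_eq_mul]
        exact card_nsmul_le_sum _ _ _ fun w hw ↦ (not_le.mp (mem_filter.mp hw).2).le
      _ ≤ ∑ w ∈ N, defect G x z w :=
        sum_le_sum_of_subset_of_nonneg (filter_subset _ _) fun w _ _ ↦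
          defect_nonneg (h.nonneg w) (h.le_one w)
      _ ≤ δ * δ := by linarith [sq_nonneg ((G.degree z : ℝ) - Fintype.card V / 2)]
  have hN : (#N : ℝ) = Fintype.card V - G.degree z := cast_card_compl_neighborFinset G z
  have hsplit : (#(nearTwins G x z δ) : ℝ) + #{w ∈ N | ¬ defect G x z w ≤ δ} = #N :=
    mod_cast card_filter_add_card_filter_not (s := N) (defect G x z · ≤ δ)
  linarith [(abs_le.mp (h.abs_degree_sub_half_le hη0.le hdef)).2]

theorem one_sub_le_of_mem_nearTwins (h : IsNormalizedEigenvector G L x z)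
    (hdeg : (Fintype.card V : ℝ) / 3 ≤ G.degree z)
    (hw : w ∈ nearTwins G x z (η * Fintype.card V)) : 1 - 3 * η ≤ x w := by
  have hcard : (0 : ℝ) < Fintype.card V := mod_cast Fintype.card_pos_iff.mpr ⟨z⟩
  have hw' : Fintype.card V / 3 * (1 - x w) ≤ η * Fintype.card V :=
    calc Fintype.card V / 3 * (1 - x w)
      _ ≤ G.degree z * (1 - x w) :=
        mul_le_mul_of_nonneg_right hdeg (sub_nonneg.mpr (h.le_one w))
      _ ≤ defect G x z w := degree_mul_one_sub_le_defect (h.nonneg w)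
      _ ≤ η * Fintype.card V := (mem_filter.mp hw).2
  have := le_of_mul_le_mul_right (hw'.trans_eq' (by ring : _ = (1 - x w) / 3 * _)) hcard
  linarith

theorem le_sum_erase_nearTwins (h : IsNormalizedEigenvector G L x z) (hη0 : 0 < η)
    (hη6 : 6 * η ≤ 1) (hcard : 1 ≤ η * Fintype.card V)
    (hdef : ∑ w ∈ (G.neighborFinset z)ᶜ, defect G x z w +
      (G.degree z - Fintype.card V / 2 : ℝ) ^ 2 ≤ (η * Fintype.card V) ^ 2)
    (v : V) :
    (1 / 2 - 3 * η) * (1 - 3 * η) * Fintype.card V ≤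
      ∑ u ∈ (nearTwins G x z (η * Fintype.card V)).erase v, x u := by
  set S := (nearTwins G x z (η * Fintype.card V)).erase v
  have hle : (#(nearTwins G x z (η * Fintype.card V)) : ℝ) ≤ #S + 1 :=
    mod_cast tsub_le_iff_right.mp pred_card_le_card_erase
  calc (1 / 2 - 3 * η) * (1 - 3 * η) * Fintype.card V
    _ = (1 / 2 - 3 * η) * Fintype.card V * (1 - 3 * η) := by ring
    _ ≤ #S * (1 - 3 * η) :=
      mul_le_mul_of_nonneg_right (by linarith [h.le_card_nearTwins hη0 hdef]) (by linarith)
    _ ≤ ∑ u ∈ S, x u := by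
      rw [← nsmul_eq_mul]
      exact card_nsmul_le_sum _ _ _ fun u hu ↦ h.one_sub_le_of_mem_nearTwins
        (h.card_div_three_le_degree hη0.le hη6 hdef) (mem_of_mem_erase hu)

end IsNormalizedEigenvector

theorem exists_adj_forall_mem_of_card_lt {A T U : Finset V}
    (h : #T + ∑ u ∈ U, #(A \ G.neighborFinset u) < #A) :
    ∃ w ∈ A, w ∉ T ∧ ∀ u ∈ U, G.Adj u w := by
  have hcard : #(T ∪ U.biUnion fun u ↦ A \ G.neighborFinset u) < #A :=
    ((card_union_le _ _).trans (Nat.add_le_add_left card_biUnion_le _)).trans_lt h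
  obtain ⟨w, hwA, hw⟩ := exists_mem_notMem_of_card_lt_card hcard
  refine ⟨w, hwA, fun hT ↦ hw (mem_union_left _ hT), fun u hu ↦ ?_⟩
  by_contra hadj
  exact hw (mem_union_right _ (mem_biUnion.mpr ⟨u, hu, by simp [hwA, hadj]⟩))

theorem free_rewire_of_subset_nearTwins [Fintype α] {F : SimpleGraph α}
    (hx1 : ∀ u, x u ≤ 1) (hG : F.Free G) {δ : ℝ} (hδ : 0 ≤ δ)
    (hdeg : Fintype.card α * (1 + δ) < G.degree z) (v : V) {S : Set V}
    (hS : S ⊆ nearTwins G x z δ) : F.Free (rewire G v S) := by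
  classical
  refine rewire_free hG fun T hT ↦ ?_
  have hmiss (u : V) (hu : u ∈ T.filter (· ∈ S)) :
      (#(G.neighborFinset z \ G.neighborFinset u) : ℝ) ≤ δ := by
    have hcod : #(G.neighborFinset z \ G.neighborFinset u) + codegree G z u = G.degree z :=
      card_sdiff_add_card_inter _ _
    have hle : (#(G.neighborFinset z \ G.neighborFinset u) : ℝ) + codegree G z u = G.degree z :=
      mod_cast hcod
    linarith [degree_sub_codegree_le_defect (G := G) (z := z) (hx1 u),
      (mem_filter.mp (hS (mem_filter.mp hu).2)).2]
  have hlt : (#T : ℝ) + ∑ u ∈ T with u ∈ S, (#(G.neighborFinset z \ G.neighborFinset u) : ℝ) <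
      #(G.neighborFinset z) :=
    calc (#T : ℝ) + ∑ u ∈ T with u ∈ S, (#(G.neighborFinset z \ G.neighborFinset u) : ℝ)
      _ ≤ #T + #{u ∈ T | u ∈ S} * δ := by
        rw [← nsmul_eq_mul]
        gcongr
        exact sum_le_card_nsmul _ _ _ hmiss
      _ ≤ Fintype.card α + Fintype.card α * δ := by
        gcongr
        exact (card_filter_le _ _).trans hT
      _ < #(G.neighborFinset z) := by rwa [card_neighborFinset_eq_degree, ← mul_one_add]
  obtain ⟨w, -, hwT, hw⟩ := exists_adj_forall_mem_of_card_lt (G := G) (mod_cast hlt)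
  exact ⟨w, hwT, fun u hu huS ↦ (hw u (mem_filter.mpr ⟨hu, huS⟩)).symm⟩

end NearTwins

theorem IsSpex.one_sub_le_of_sum_codegree_le [Fintype α] {F : SimpleGraph α} {n : ℕ}
    {G : SimpleGraph (Fin n)} [DecidableRel G.Adj] (hG : IsSpex F G) {x : Fin n → ℝ} {z : Fin n}
    (hx : IsNormalizedEigenvector G (lam1 G) x z) (hL : ((n : ℝ) - 1) / 2 ≤ lam1 G) {η : ℝ}
    (hη0 : 0 < η) (hηF : 6 * (Fintype.card α + 1) * η < 1) (hn : 1 ≤ η * n)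
    (hη : (n : ℝ) / 2 + ∑ w ∈ G.neighborFinset z, (codegree G z w : ℝ) ≤ (η * n) ^ 2)
    (v : Fin n) : 1 - 22 * η ≤ x v := by
  have hcard : (Fintype.card (Fin n) : ℝ) = n := by rw [Fintype.card_fin]
  rw [← hcard] at hL hn hη
  set m : ℝ := (Fintype.card (Fin n) : ℝ)
  have hm : 0 < m := by rw [hcard]; exact mod_cast z.pos
  have hαη : 0 ≤ Fintype.card α * η := by positivity
  have hη6 : 6 * η ≤ 1 := by linarith
  have hdef := hx.sum_defect_add_sq_le hL hη
  have hfree : F.Free (rewire G v ((nearTwins G x z (η * m)).erase v)) := by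
    refine free_rewire_of_subset_nearTwins hx.le_one hG.1 (δ := η * m) (by positivity) ?_ v
      (coe_subset.mpr (erase_subset _ _))
    calc Fintype.card α * (1 + η * m)
      _ ≤ Fintype.card α * (2 * (η * m)) := by gcongr; linarith
      _ < m / 3 := by linarith [mul_lt_mul_of_pos_right hηF hm]
      _ ≤ G.degree z := hx.card_div_three_le_degree hη0.le hη6 hdef
  have hcompare := two_mul_sum_le_of_lam1_rewire_le (notMem_erase v _) hx.mulVec_eq (hG.2 _ hfree)
  have hv : (1 - 9 * η + 18 * η ^ 2) * m ≤ (1 / 2 + η) * (1 + x v ^ 2) * m :=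
    calc (1 - 9 * η + 18 * η ^ 2) * m
      _ = 2 * ((1 / 2 - 3 * η) * (1 - 3 * η) * m) := by ring
      _ ≤ lam1 G * (1 + x v ^ 2) := by linarith [hx.le_sum_erase_nearTwins hη0 hη6 hn hdef v]
      _ ≤ (1 / 2 + η) * m * (1 + x v ^ 2) := by
        gcongr
        exact hx.eigenvalue_le hη0.le (by linarith)
      _ = (1 / 2 + η) * (1 + x v ^ 2) * m := by ring
  have hv' : (1 / 2 + η) * (2 - 22 * η) ≤ (1 / 2 + η) * (1 + x v ^ 2) := by
    linarith [le_of_mul_le_mul_right hv hm, sq_nonneg η]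
  have hsq : x v ^ 2 ≤ x v := sq_le (hx.nonneg v) (hx.le_one v)
  linarith [le_of_mul_le_mul_left hv' (by positivity)]

theorem eigenvector_entries_large_general [Finite α] {F : SimpleGraph α} {z : α}
    (hF : ¬ F.Colorable 2) (hz : (F.induce {z}ᶜ).Colorable 2) {ε : ℝ} (hε : 0 < ε) :
    ∀ᶠ n : ℕ in atTop, ∀ G : SimpleGraph (Fin n), IsSpex F G →
      ∀ x : Fin n → ℝ, (∀ v, 0 ≤ x v) → adjMulVec G x = lam1 G • x →
        (∀ v, x v ≤ 1) → (∃ v, x v = 1) → ∀ u, 1 - ε < x u := by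
  classical
  have := Fintype.ofFinite α
  obtain ⟨η, hη0, hη⟩ : ∃ η : ℝ, 0 < η ∧ η < min (ε / 22) (1 / (6 * (Fintype.card α + 1))) :=
    exists_between (by positivity)
  rw [lt_min_iff, lt_div_iff₀ (by positivity), lt_div_iff₀ (by positivity)] at hη
  filter_upwards [eventually_sum_codegree_neighborFinset_le hz (pow_pos hη0 2),
    eventually_ge_atTop ⌈1 / η⌉₊] with n hcod hn G hG x hx0 hAx hx1 ⟨w, hw⟩ u
  have hx : IsNormalizedEigenvector G (lam1 G) x w := ⟨adjMulVec_eq G x ▸ hAx, hx0, hx1, hw⟩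
  have := hG.one_sub_le_of_sum_codegree_le hx (hG.half_sub_one_le_lam1 hF w.pos) hη0
    (by linarith) ((div_le_iff₀' hη0).mp (Nat.ceil_le.mp hn))
    ((hcod G hG.1 w).trans_eq (mul_pow η n 2).symm) u
  linarith

/-- All entries of the normalized principal eigenvector of a spectral
extremal `W_{2k+1}`-free graph exceed `1 - ε'`. -/
theorem eigenvector_entries_large (k : ℕ) (hk : 2 ≤ k) (ε' : ℝ) (hε'0 : 0 < ε')
    (hε'1 : ε' < 1) :
    ∃ N : ℕ, ∀ n : ℕ, N ≤ n → ∀ G : SimpleGraph (Fin n), IsSpexWheel (2 * k + 1) G →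
      ∀ x : Fin n → ℝ, (∀ v, 0 ≤ x v) → adjMulVec G x = lam1 G • x →
        (∀ v, x v ≤ 1) → (∃ v, x v = 1) →
        ∀ u : Fin n, 1 - ε' < x u := by
  simp only [isSpexWheel_iff_isSpex]
  exact eventually_atTop.mp <| eigenvector_entries_large_general
    (not_colorable_two_wheelGraph (by lia)) (colorable_two_induce_compl_wheelGraph k) hε'0
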